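/- arXiv:0704.3298 — 2 statements merged into one kernel-verified Lean document; each statement's English description precedes it below -/
import Mathlib

section
/- Let A, B, C, D be vector spaces over ℚ, let f : A → B and g : C → D be linear maps, and let p₁ : A × D → ℚ and p₂ : B × C → ℚ be bilinear pairings that are nondegenerate (separating in both variables) and compatible in the sense that p₁(a, g(c)) = p₂(f(a), c) for all a ∈ A and c ∈ C. Then there exists a bilinear pairing p₃ : (range f) × (range g) → ℚ which is nondegenerate (separating in both variables) and satisfies p₃(f(a), g(c)) = p₂(f(a), c) = p₁(a, g(c)) for all a ∈ A and c ∈ C. -/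
/-!
For `x = f a` the functional `p₂ x` on `C` equals `p₁ a ∘ g`, so it factors through `range g`, and
uniquely so because `C → range g` is onto. This makes every `x` in `range f` a functional on
`range g`. The resulting pairing can be evaluated by `p₂` at `x` and `c` when its second argument is
`g c`, and by `p₁` at `a` and `y` when its first argument is `f a`; the first formula transfers left
separation from `p₂`, the second right separation from `p₁`.
-/

section RangePairing

open LinearMap

variable {R A B C D M : Type*} [CommSemiring R]
  [AddCommMonoid A] [Module R A] [AddCommMonoid B] [Module R B]
  [AddCommMonoid C] [Module R C] [AddCommMonoid D] [Module R D]
  [AddCommMonoid M] [Module R M]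
  {f : A →ₗ[R] B} {g : C →ₗ[R] D} {p₁ : A →ₗ[R] D →ₗ[R] M} {p₂ : B →ₗ[R] C →ₗ[R] M}

theorem domRestrict_range_mem_range_lcomp (h : ∀ a c, p₁ a (g c) = p₂ (f a) c) (x : range f) :
    p₂.domRestrict (range f) x ∈ range (lcomp R M g.rangeRestrict) := by
  obtain ⟨_, a, rfl⟩ := x
  exact ⟨(p₁ a).domRestrict (range g), LinearMap.ext (h a)⟩

/-- The pairing on the images of `f` and `g` induced by pairings `p₁` and `p₂` for which `f` and `g`
are adjoint. It sends `x` to the unique linear map on `range g` whose pullback along `g` is `p₂ x`;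
inverting the injective pullback map avoids choosing linear sections of `f` or `g`. -/
noncomputable def rangePairing (h : ∀ a c, p₁ a (g c) = p₂ (f a) c) :
    range f →ₗ[R] range g →ₗ[R] M :=
  (LinearEquiv.ofInjective (lcomp R M g.rangeRestrict)
    (lcomp_injective_of_surjective _ g.surjective_rangeRestrict)).symm ∘ₗ
    (p₂.domRestrict (range f)).codRestrict _ (domRestrict_range_mem_range_lcomp h)

theorem rangePairing_apply_rangeRestrict (h : ∀ a c, p₁ a (g c) = p₂ (f a) c)
    (x : range f) (c : C) : rangePairing h x (g.rangeRestrict c) = p₂ x c := by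
  have pullback_eq : lcomp R M g.rangeRestrict (rangePairing h x) = p₂ x :=
    LinearEquiv.ofInjective_symm_apply _
      (h := lcomp_injective_of_surjective _ g.surjective_rangeRestrict) _
  exact LinearMap.congr_fun pullback_eq c

theorem rangePairing_rangeRestrict_apply (h : ∀ a c, p₁ a (g c) = p₂ (f a) c)
    (a : A) (y : range g) : rangePairing h (f.rangeRestrict a) y = p₁ a y := by
  obtain ⟨c, rfl⟩ := g.surjective_rangeRestrict y
  exact (rangePairing_apply_rangeRestrict h _ c).trans (h a c).symm

theorem separatingLeft_rangePairing (h : ∀ a c, p₁ a (g c) = p₂ (f a) c)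
    (h₂ : p₂.SeparatingLeft) : (rangePairing h).SeparatingLeft := fun x hx ↦
  Subtype.ext <| h₂ x fun c ↦
    (rangePairing_apply_rangeRestrict h x c).symm.trans (hx (g.rangeRestrict c))

theorem separatingRight_rangePairing (h : ∀ a c, p₁ a (g c) = p₂ (f a) c)
    (h₁ : p₁.SeparatingRight) : (rangePairing h).SeparatingRight := fun y hy ↦
  Subtype.ext <| h₁ y fun a ↦
    (rangePairing_rangeRestrict_apply h a y).symm.trans (hy (f.rangeRestrict a))

theorem duals_of_images_general (h₁ : p₁.SeparatingRight) (h₂ : p₂.SeparatingLeft)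
    (h : ∀ a c, p₁ a (g c) = p₂ (f a) c) :
    ∃ p₃ : range f →ₗ[R] range g →ₗ[R] M,
      p₃.SeparatingLeft ∧ p₃.SeparatingRight ∧
      ∀ a c, p₃ ⟨f a, mem_range_self f a⟩ ⟨g c, mem_range_self g c⟩ = p₂ (f a) c ∧
        p₂ (f a) c = p₁ a (g c) :=
  ⟨rangePairing h, separatingLeft_rangePairing h h₂, separatingRight_rangePairing h h₁,
    fun a c ↦ ⟨rangePairing_apply_rangeRestrict h (f.rangeRestrict a) c, (h a c).symm⟩⟩

end RangePairing

/-- Duals of Images: given compatible nondegenerate pairings `p₁ : A × D → ℚ` and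
`p₂ : B × C → ℚ` with linear maps `f : A → B`, `g : C → D` satisfying
`p₁ (a, g c) = p₂ (f a, c)`, there is an induced nondegenerate pairing
`range f × range g → ℚ` compatible with `p₁` and `p₂`. -/
theorem duals_of_images
    (A B C D : Type*)
    [AddCommGroup A] [Module ℚ A] [AddCommGroup B] [Module ℚ B]
    [AddCommGroup C] [Module ℚ C] [AddCommGroup D] [Module ℚ D]
    (f : A →ₗ[ℚ] B) (g : C →ₗ[ℚ] D)
    (p₁ : A →ₗ[ℚ] D →ₗ[ℚ] ℚ) (p₂ : B →ₗ[ℚ] C →ₗ[ℚ] ℚ)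
    (h₁l : ∀ a : A, (∀ d : D, p₁ a d = 0) → a = 0)
    (h₁r : ∀ d : D, (∀ a : A, p₁ a d = 0) → d = 0)
    (h₂l : ∀ b : B, (∀ c : C, p₂ b c = 0) → b = 0)
    (h₂r : ∀ c : C, (∀ b : B, p₂ b c = 0) → c = 0)
    (hcompat : ∀ (a : A) (c : C), p₁ a (g c) = p₂ (f a) c) :
    ∃ p₃ : (LinearMap.range f) →ₗ[ℚ] (LinearMap.range g) →ₗ[ℚ] ℚ,
      (∀ x : LinearMap.range f, (∀ y : LinearMap.range g, p₃ x y = 0) → x = 0) ∧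
      (∀ y : LinearMap.range g, (∀ x : LinearMap.range f, p₃ x y = 0) → y = 0) ∧
      (∀ (a : A) (c : C),
        p₃ ⟨f a, LinearMap.mem_range_self f a⟩ ⟨g c, LinearMap.mem_range_self g c⟩
          = p₂ (f a) c ∧
        p₂ (f a) c = p₁ a (g c)) := by
  exact duals_of_images_general h₁r h₂l hcompat
end

section
/- Let a₁, a₂, a₃, a₄, a₅ ∈ ℂ with aᵢ ≠ 0 for i = 1, 2, 3, 4, and let I be the polynomial I = X₅³·(X₁² + X₂² + X₃² + X₄²) + Σ_{i=1}^{5} aᵢ Xᵢ⁵ in five variables over ℂ. If x = (x₁,...,x₅) ∈ ℂ⁵ satisfies x₅ = 0 and (∂I/∂Xᵢ)(x) = 0 for i = 1, 2, 3, 4, then xᵢ = 0 for i = 1, 2, 3, 4, and hence x = 0. In particular, every common zero of I and all its partial derivatives other than the origin has x₅ ≠ 0, so all singular points of the quintic hypersurface {I = 0} ⊂ ℙ⁴ lie in the coordinate patch x₅ ≠ 0. -/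
open MvPolynomial

/-!
Away from the direction `k`, differentiating a multiple of `X k` gives a multiple of `X k` again.
So on the hyperplane `x k = 0` the partial derivatives of `I` in these directions agree with those
of its diagonal part `∑ aᵢ Xᵢⁿ`, and `n aᵢ xᵢⁿ⁻¹ = 0` forces `xᵢ = 0`.
-/

section

variable {σ R : Type*} [CommSemiring R]

theorem X_dvd_pderiv_of_ne {i k : σ} (hik : i ≠ k) {p : MvPolynomial σ R} (hp : X k ∣ p) :
    X k ∣ pderiv i p := by
  obtain ⟨q, rfl⟩ := hp
  rw [pderiv_mul, pderiv_X_of_ne hik.symm, zero_mul, zero_add]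
  exact dvd_mul_right _ _

theorem eval_eq_zero_of_X_dvd {k : σ} {p : MvPolynomial σ R} (hp : X k ∣ p) {x : σ → R}
    (hx : x k = 0) : eval x p = 0 := by
  obtain ⟨q, rfl⟩ := hp
  rw [eval_mul, eval_X, hx, zero_mul]

theorem pderiv_sum_C_mul_X_pow [Fintype σ] (a : σ → R) (n : ℕ) (i : σ) :
    pderiv i (∑ j, C (a j) * X j ^ n) = C (a i) * ((n : MvPolynomial σ R) * X i ^ (n - 1)) := by
  rw [map_sum, Finset.sum_eq_single_of_mem i (Finset.mem_univ i)]
  · rw [pderiv_C_mul, pderiv_pow, pderiv_X_self, mul_one]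
  · intro j _ hj
    rw [pderiv_C_mul, pderiv_pow, pderiv_X_of_ne hj, mul_zero, mul_zero]

theorem quintic_singularities_in_patch_general [Fintype σ] [NoZeroDivisors R] {n : ℕ}
    (hn : (n : R) ≠ 0) {k : σ} {a : σ → R} (ha : ∀ i, i ≠ k → a i ≠ 0) {p I : MvPolynomial σ R}
    (hp : X k ∣ p) (hI : I = p + ∑ i, C (a i) * X i ^ n) {x : σ → R} (hxk : x k = 0)
    (hx : ∀ i, i ≠ k → eval x (pderiv i I) = 0) :
    x = 0 := by
  funext i
  obtain rfl | hik := eq_or_ne i k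
  · exact hxk
  have hpi : eval x (pderiv i p) = 0 := eval_eq_zero_of_X_dvd (X_dvd_pderiv_of_ne hik hp) hxk
  have hdiag : a i * (n * x i ^ (n - 1)) = 0 :=
    calc a i * (n * x i ^ (n - 1))
      _ = eval x (pderiv i (∑ j, C (a j) * X j ^ n)) := by
        simp only [pderiv_sum_C_mul_X_pow, map_mul, map_pow, eval_C, eval_X, map_natCast]
      _ = eval x (pderiv i I) := by rw [hI, map_add, map_add, hpi, zero_add]
      _ = 0 := hx i hik
  have hpow : x i ^ (n - 1) = 0 :=
    eq_zero_of_ne_zero_of_mul_left_eq_zero hn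
      (eq_zero_of_ne_zero_of_mul_left_eq_zero (ha i hik) hdiag)
  exact eq_zero_of_pow_eq_zero hpow

end

/-- For the quintic `I = X₅³(X₁²+X₂²+X₃²+X₄²) + Σᵢ aᵢXᵢ⁵` with `a₁,…,a₄ ≠ 0`
(variables indexed by `Fin 5`, with index `4` playing the role of `x₅`):
any point with `x₅ = 0` at which the first four partial derivatives vanish is the
origin; in particular every nonzero common zero of all partial derivatives has
`x₅ ≠ 0`, so all singular points of `{I = 0} ⊂ ℙ⁴` lie in the patch `x₅ ≠ 0`. -/
theorem quintic_singularities_in_patch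
    (a : Fin 5 → ℂ) (ha : ∀ i : Fin 5, i ≠ 4 → a i ≠ 0)
    (I : MvPolynomial (Fin 5) ℂ)
    (hI : I = (X 4) ^ 3 * ((X 0) ^ 2 + (X 1) ^ 2 + (X 2) ^ 2 + (X 3) ^ 2)
        + ∑ i : Fin 5, MvPolynomial.C (a i) * (X i) ^ 5) :
    (∀ x : Fin 5 → ℂ, x 4 = 0 →
      (∀ i : Fin 5, i ≠ 4 → MvPolynomial.eval x (MvPolynomial.pderiv i I) = 0) →
      ∀ i : Fin 5, x i = 0) ∧
    (∀ x : Fin 5 → ℂ,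
      (∀ i : Fin 5, MvPolynomial.eval x (MvPolynomial.pderiv i I) = 0) →
      x ≠ 0 → x 4 ≠ 0) := by
  have key {x} := quintic_singularities_in_patch_general (x := x) (by norm_num) ha
    (dvd_mul_of_dvd_left (dvd_pow_self (X 4) three_ne_zero) _) hI
  exact ⟨fun x h4 h ↦ congrFun (key h4 h), fun x h hx h4 ↦ hx (key h4 fun i _ ↦ h i)⟩
end
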